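/- Let K be a field, h a natural number, and M an h×h matrix over K. A scalar μ ∈ K is a root of the characteristic polynomial of the 2h×2h block matrix with blocks (0, M; M, 0) if and only if μ or -μ is a root of the characteristic polynomial of M. -/

import Mathlib

/-!
Conjugating the block matrix `(A, B; B, A)` by the unipotent matrix `(1, 0; 1, 1)` makes it block
upper triangular, with diagonal blocks `A + B` and `A - B`. For `A = 0` and `B = M` the
characteristic polynomial is therefore the product of those of `M` and `-M`.
-/

section CommRing

open Matrix

variable {R n : Type*} [CommRing R] [Fintype n] [DecidableEq n]

theorem charpoly_fromBlocks_circulant (A B : Matrix n n R) :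
    (fromBlocks A B B A).charpoly = (A + B).charpoly * (A - B).charpoly := by
  let P : Matrix (n ⊕ n) (n ⊕ n) R := fromBlocks 1 0 1 1
  let Q : Matrix (n ⊕ n) (n ⊕ n) R := fromBlocks 1 0 (-1) 1
  have hPQ : P * Q = 1 := by
    simp [P, Q, fromBlocks_multiply]
  have triangularize :
      Q * (fromBlocks A B B A * P) = fromBlocks (A + B) B 0 (A - B) := by
    simp only [P, Q, fromBlocks_multiply]
    congr 1 <;> noncomm_ring
  calc
    (fromBlocks A B B A).charpoly = (fromBlocks A B B A * P * Q).charpoly := by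
      rw [mul_assoc, hPQ, mul_one]
    _ = (fromBlocks (A + B) B 0 (A - B)).charpoly := by
      rw [charpoly_mul_comm, triangularize]
    _ = (A + B).charpoly * (A - B).charpoly :=
      charpoly_fromBlocks_zero₂₁ ..

theorem eval_charpoly_neg (M : Matrix n n R) (μ : R) :
    (-M).charpoly.eval μ = (-1) ^ Fintype.card n * M.charpoly.eval (-μ) := by
  rw [eval_charpoly, eval_charpoly, ← det_neg, map_neg]
  congr 1
  abel

theorem isRoot_charpoly_neg_iff (M : Matrix n n R) (μ : R) :
    (-M).charpoly.IsRoot μ ↔ M.charpoly.IsRoot (-μ) := by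
  rw [Polynomial.IsRoot.def, Polynomial.IsRoot.def, eval_charpoly_neg,
    (isUnit_one.neg.pow _).mul_right_eq_zero]

theorem stmt_2_general [NoZeroDivisors R] (M : Matrix n n R) (μ : R) :
    (fromBlocks 0 M M 0).charpoly.IsRoot μ ↔
      M.charpoly.IsRoot μ ∨ M.charpoly.IsRoot (-μ) := by
  rw [charpoly_fromBlocks_circulant, zero_add, zero_sub, Polynomial.root_mul,
    isRoot_charpoly_neg_iff]

end CommRing

/-- Over a field `K`, a scalar `μ` is a root of the characteristic polynomial of
`fromBlocks 0 M M 0` iff `μ` or `-μ` is a root of the characteristic polynomial of `M`. -/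
theorem stmt_2 {K : Type*} [Field K] (h : ℕ) (M : Matrix (Fin h) (Fin h) K) (μ : K) :
    (Matrix.fromBlocks (0 : Matrix (Fin h) (Fin h) K) M M 0).charpoly.IsRoot μ ↔
      M.charpoly.IsRoot μ ∨ M.charpoly.IsRoot (-μ) :=
  stmt_2_general M μ
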